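/- For α, β, ν_0, γ, σ > 0, real a, and x > 0: ∫_0^x (x−t)^{β−1} E_{α,β}^γ(a(x−t)^α) · t^{ν_0−1} E_{α,ν_0}^σ(a t^α) dt = x^{β+ν_0−1} E_{α,β+ν_0}^{γ+σ}(a x^α). -/

import Mathlib

open Real MeasureTheory intervalIntegral

noncomputable def ML1 (ν z : ℝ) : ℝ := ∑' n : ℕ, z ^ n / Real.Gamma (ν * n + 1)

noncomputable def ML2 (β γ z : ℝ) : ℝ := ∑' r : ℕ, z ^ r / Real.Gamma (β * r + γ)

noncomputable def poch (ξ : ℝ) (r : ℕ) : ℝ := ∏ i ∈ Finset.range r, (ξ + i)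

noncomputable def ML3 (β γ ξ z : ℝ) : ℝ :=
  ∑' r : ℕ, poch ξ r * z ^ r / (r.factorial * Real.Gamma (β * r + γ))

/-!
Write `e u t = t ^ (u - 1) / Γ u` and let `c ξ r = (ξ)_r / r!` be the multichoose coefficient. Then
`t ^ (β - 1) * E_{α,β}^ξ (a t ^ α) = ∑ r, c ξ r * a ^ r * e (α r + β) t`. Euler's beta integral says
that the convolution of `e u` and `e v` is `e (u + v)`, so convolving two such series termwise gives
a double series whose `(r, s)` term depends on `r + s` only, apart from the factor `c γ r * c σ s`.
Summing that factor along antidiagonals gives `c (γ + σ) k`, by Vandermonde's identity. The same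
identity, applied to `|γ|`, `|σ|` and `|a|`, gives the absolute convergence that justifies the
interchange of sum and integral.
-/

open Finset.HasAntidiagonal (antidiagonal mem_antidiagonal)
open Ring (multichoose)

section Multichoose

theorem multichoose_eq_neg_one_pow_mul_choose_neg {R : Type*} [Ring R] [BinomialRing R]
    (r : R) (n : ℕ) : multichoose r n = (-1) ^ n * Ring.choose (-r) n := by
  rw [Ring.choose_neg', Units.smul_def, Int.coe_negOnePow_natCast, zsmul_eq_mul]
  push_cast
  rw [← mul_assoc, ← pow_add, Even.neg_one_pow ⟨n, rfl⟩, one_mul]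

theorem multichoose_add {R : Type*} [Ring R] [BinomialRing R] {r s : R} (n : ℕ)
    (h : Commute r s) :
    multichoose (r + s) n = ∑ p ∈ antidiagonal n, multichoose r p.1 * multichoose s p.2 := by
  simp only [multichoose_eq_neg_one_pow_mul_choose_neg]
  rw [neg_add, Ring.add_choose_eq n h.neg_left.neg_right, Finset.mul_sum]
  refine Finset.sum_congr rfl fun p hp => ?_
  have neg_one_pow_commute : Commute (Ring.choose (-r) p.1) ((-1) ^ p.2) :=
    (Commute.neg_one_right _).pow_right _
  rw [neg_one_pow_commute.mul_mul_mul_comm, ← pow_add, mem_antidiagonal.1 hp]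

theorem ascPochhammer_eval_eq_prod_range {R : Type*} [CommSemiring R] (n : ℕ) (r : R) :
    (ascPochhammer R n).eval r = ∏ i ∈ Finset.range n, (r + i) := by
  induction n with
  | zero => simp
  | succ n ih => simp [ascPochhammer_succ_right, ih, ← Finset.prod_range_succ]

theorem multichoose_eq_prod_div {K : Type*} [Field K] [CharZero K] (ξ : K) (n : ℕ) :
    multichoose ξ n = ∏ i ∈ Finset.range n, (ξ + i) / (i + 1) := by
  have factorial_ne_zero : (n.factorial : K) ≠ 0 := by exact_mod_cast n.factorial_ne_zero
  have prod_succ : ∏ i ∈ Finset.range n, ((i : K) + 1) = n.factorial := by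
    exact_mod_cast Finset.prod_range_add_one_eq_factorial n
  rw [Finset.prod_div_distrib, prod_succ, eq_div_iff factorial_ne_zero, mul_comm, ← nsmul_eq_mul,
    Ring.factorial_nsmul_multichoose_eq_ascPochhammer, Polynomial.ascPochhammer_smeval_eq_eval,
    ascPochhammer_eval_eq_prod_range]

theorem poch_div_factorial (ξ : ℝ) (n : ℕ) : poch ξ n / n.factorial = multichoose ξ n := by
  rw [multichoose_eq_prod_div, Finset.prod_div_distrib, poch,
    ← Finset.prod_range_add_one_eq_factorial]
  push_cast
  rfl

theorem abs_multichoose_le_multichoose_abs (ξ : ℝ) (n : ℕ) :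
    |multichoose ξ n| ≤ multichoose |ξ| n := by
  rw [multichoose_eq_prod_div, multichoose_eq_prod_div, Finset.abs_prod]
  refine Finset.prod_le_prod (fun i _ => abs_nonneg _) fun i _ => ?_
  rw [abs_div, abs_of_pos (Nat.cast_add_one_pos i : (0 : ℝ) < i + 1)]
  gcongr
  simpa using abs_add_le ξ i

theorem multichoose_le_max_pow {ξ : ℝ} (hξ : 0 ≤ ξ) (n : ℕ) :
    multichoose ξ n ≤ max ξ 1 ^ n := by
  rw [multichoose_eq_prod_div]
  calc ∏ i ∈ Finset.range n, (ξ + i) / (i + 1) ≤ ∏ _i ∈ Finset.range n, max ξ 1 := by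
        refine Finset.prod_le_prod (fun i _ => by positivity) fun i _ => ?_
        rw [div_le_iff₀ (Nat.cast_add_one_pos i)]
        nlinarith [le_max_left ξ 1, le_max_right ξ 1, Nat.cast_nonneg (α := ℝ) i]
    _ = max ξ 1 ^ n := by rw [Finset.prod_const, Finset.card_range]

end Multichoose

section Gamma

theorem rpow_mul_exp_neg_le_Gamma {s M : ℝ} (hs : 1 ≤ s) (hM : 0 ≤ M) :
    M ^ (s - 1) * exp (-M) ≤ Gamma s := by
  have hs0 : 0 < s := by linarith
  have integrable_Gamma := GammaIntegral_convergent hs0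
  have hsub : Set.Ioi M ⊆ Set.Ioi (0 : ℝ) := Set.Ioi_subset_Ioi hM
  calc M ^ (s - 1) * exp (-M) = ∫ t in Set.Ioi M, exp (-t) * M ^ (s - 1) := by
        rw [MeasureTheory.integral_mul_const, integral_exp_neg_Ioi, mul_comm]
    _ ≤ ∫ t in Set.Ioi M, exp (-t) * t ^ (s - 1) := by
        refine setIntegral_mono_on ((integrableOn_exp_neg_Ioi M).mul_const _)
          (integrable_Gamma.mono_set hsub) measurableSet_Ioi fun t (ht : M < t) => ?_
        gcongr
    _ ≤ ∫ t in Set.Ioi 0, exp (-t) * t ^ (s - 1) := by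
        refine setIntegral_mono_set integrable_Gamma ?_ hsub.eventuallyLE
        refine ae_restrict_of_forall_mem measurableSet_Ioi fun t (ht : 0 < t) => ?_
        exact (mul_pos (exp_pos _) (rpow_pos_of_pos ht _)).le
    _ = Gamma s := (Gamma_eq_integral hs0).symm

theorem summable_pow_div_Gamma {α : ℝ} (hα : 0 < α) (β w : ℝ) :
    Summable fun r : ℕ => w ^ r / Gamma (α * r + β) := by
  set q : ℝ := |w| + 1
  have hq : 0 < q := by positivity
  set M : ℝ := q ^ α⁻¹
  have hM : 0 < M := by positivity
  have rpow_exponent (r : ℕ) : M ^ (α * r + β - 1) = q ^ r * M ^ (β - 1) := by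
    rw [add_sub_assoc, rpow_add hM, rpow_mul hM.le, rpow_inv_rpow hq.le hα.ne', rpow_natCast]
  have summable_geometric : Summable fun r : ℕ => (|w| / q) ^ r * (M ^ (β - 1) * exp (-M))⁻¹ := by
    refine Summable.mul_right _ (summable_geometric_of_lt_one (by positivity) ?_)
    exact (div_lt_one hq).2 (lt_add_one _)
  refine summable_geometric.of_norm_bounded_eventually_nat ?_
  have tendsto_argument : Filter.Tendsto (fun r : ℕ => α * r + β) .atTop .atTop :=
    Filter.tendsto_atTop_add_const_right _ _ (tendsto_natCast_atTop_atTop.const_mul_atTop hα)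
  filter_upwards [tendsto_argument.eventually_ge_atTop 1] with r hr
  calc ‖w ^ r / Gamma (α * r + β)‖ = |w| ^ r / Gamma (α * r + β) := by
        rw [norm_div, norm_pow, norm_eq_abs, norm_of_nonneg (Gamma_nonneg_of_nonneg (by linarith))]
    _ ≤ |w| ^ r / (M ^ (α * r + β - 1) * exp (-M)) := by
        gcongr
        exact rpow_mul_exp_neg_le_Gamma hr hM.le
    _ = (|w| / q) ^ r * (M ^ (β - 1) * exp (-M))⁻¹ := by
        rw [rpow_exponent, div_pow]
        field_simp

end Gamma

section Antidiagonal

variable {A : Type*} [AddMonoid A] [Finset.HasAntidiagonal A]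

theorem summable_of_summable_sum_antidiagonal {f : A × A → ℝ} (hf : 0 ≤ f)
    (h : Summable fun n => ∑ p ∈ antidiagonal n, f p) : Summable f := by
  refine Finset.HasAntidiagonal.sigmaAntidiagonalEquivProd.summable_iff.1 <|
    (summable_sigma_of_nonneg fun _ => hf _).2 ⟨fun n => Summable.of_finite, h.congr fun n => ?_⟩
  exact ((antidiagonal n).tsum_subtype f).symm

theorem tsum_eq_tsum_sum_antidiagonal {E : Type*} [AddCommMonoid E] [TopologicalSpace E]
    [ContinuousAdd E] [T3Space E] {f : A × A → E} (hf : Summable f) :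
    ∑' p, f p = ∑' n, ∑ p ∈ antidiagonal n, f p := by
  have summable_sigma := Finset.HasAntidiagonal.sigmaAntidiagonalEquivProd.summable_iff.2 hf
  rw [← Finset.HasAntidiagonal.sigmaAntidiagonalEquivProd.tsum_eq]
  refine (summable_sigma.tsum_sigma' fun n => Summable.of_finite).trans (tsum_congr fun n => ?_)
  exact (antidiagonal n).tsum_subtype f

end Antidiagonal

section RiemannLiouville

/-- The Riemann–Liouville kernel `t ^ (u - 1) / Γ(u)`, convolution with which is fractional
integration of order `u`. -/
noncomputable def rlKernel (u t : ℝ) : ℝ := t ^ (u - 1) / Gamma u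

variable {u v x t : ℝ}

theorem rlKernel_pos (hu : 0 < u) (ht : 0 < t) : 0 < rlKernel u t :=
  div_pos (rpow_pos_of_pos ht _) (Gamma_pos_of_pos hu)

theorem rlKernel_nat_mul_add (ht : 0 < t) (α β : ℝ) (r : ℕ) :
    rlKernel (α * r + β) t = t ^ (β - 1) * ((t ^ α) ^ r / Gamma (α * r + β)) := by
  rw [rlKernel, add_sub_assoc, rpow_add ht, rpow_mul ht.le, rpow_natCast]
  ring

theorem integral_sub_rpow_mul_rpow (hu : 0 < u) (hv : 0 < v) (hx : 0 < x) :
    ∫ t in 0..x, (x - t) ^ (u - 1) * t ^ (v - 1) =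
      x ^ (u + v - 1) * (Gamma u * Gamma v / Gamma (u + v)) := by
  have complex_integral := Complex.betaIntegral_scaled v u hx
  rw [Complex.betaIntegral_eq_Gamma_mul_div _ _ (by simpa) (by simpa)] at complex_integral
  have integrand_ofReal : ∫ t in 0..x, (t : ℂ) ^ ((v : ℂ) - 1) * ((x : ℂ) - t) ^ ((u : ℂ) - 1) =
      ∫ t in 0..x, (((x - t) ^ (u - 1) * t ^ (v - 1) : ℝ) : ℂ) := by
    refine integral_congr fun t ht => ?_
    rw [Set.uIcc_of_le hx.le] at ht
    rw [Complex.ofReal_mul, Complex.ofReal_cpow (sub_nonneg.2 ht.2), Complex.ofReal_cpow ht.1]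
    push_cast
    ring
  have power_ofReal : (x : ℂ) ^ ((v : ℂ) + u - 1) = ((x ^ (u + v - 1) : ℝ) : ℂ) := by
    rw [Complex.ofReal_cpow hx.le, add_comm u v]
    push_cast
    rfl
  rw [integrand_ofReal, integral_ofReal, power_ofReal, ← Complex.ofReal_add, Complex.Gamma_ofReal,
    Complex.Gamma_ofReal, Complex.Gamma_ofReal, add_comm v u, mul_comm (Gamma v : ℂ)]
    at complex_integral
  exact_mod_cast complex_integral

theorem integral_rlKernel_mul_rlKernel (hu : 0 < u) (hv : 0 < v) (hx : 0 < x) :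
    ∫ t in Set.Ioo 0 x, rlKernel u (x - t) * rlKernel v t = rlKernel (u + v) x := by
  have hGu := (Gamma_pos_of_pos hu).ne'
  have hGv := (Gamma_pos_of_pos hv).ne'
  simp only [rlKernel, div_mul_div_comm]
  rw [MeasureTheory.integral_div, ← integral_Ioc_eq_integral_Ioo, ← integral_of_le hx.le,
    integral_sub_rpow_mul_rpow hu hv hx]
  field_simp

theorem integrableOn_rlKernel_mul_rlKernel (hu : 0 < u) (hv : 0 < v) (hx : 0 < x) :
    IntegrableOn (fun t => rlKernel u (x - t) * rlKernel v t) (Set.Ioo 0 x) :=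
  .of_integral_ne_zero <| by
    rw [integral_rlKernel_mul_rlKernel hu hv hx]
    exact (rlKernel_pos (add_pos hu hv) hx).ne'

theorem integral_tsum_rlKernel_mul_tsum_rlKernel {ι κ : Type*} [Countable ι] [Countable κ]
    {c u : ι → ℝ} {d v : κ → ℝ} (hu : ∀ i, 0 < u i) (hv : ∀ j, 0 < v j) (hx : 0 < x)
    (hc : ∀ t ∈ Set.Ioo 0 x, Summable fun i => c i * rlKernel (u i) t)
    (hd : ∀ t ∈ Set.Ioo 0 x, Summable fun j => d j * rlKernel (v j) t)
    (hcd : Summable fun p : ι × κ => c p.1 * d p.2 * rlKernel (u p.1 + v p.2) x) :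
    ∫ t in Set.Ioo 0 x, (∑' i, c i * rlKernel (u i) (x - t)) * ∑' j, d j * rlKernel (v j) t =
      ∑' p : ι × κ, c p.1 * d p.2 * rlKernel (u p.1 + v p.2) x := by
  set F : ι × κ → ℝ → ℝ := fun p t =>
    c p.1 * d p.2 * (rlKernel (u p.1) (x - t) * rlKernel (v p.2) t)
  have sub_mem {t : ℝ} (ht : t ∈ Set.Ioo 0 x) : x - t ∈ Set.Ioo 0 x :=
    ⟨sub_pos.2 ht.2, sub_lt_self x ht.1⟩
  have integrable_F (p : ι × κ) : IntegrableOn (F p) (Set.Ioo 0 x) :=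
    (integrableOn_rlKernel_mul_rlKernel (hu p.1) (hv p.2) hx).const_mul _
  have integral_F (p : ι × κ) :
      ∫ t in Set.Ioo 0 x, F p t = c p.1 * d p.2 * rlKernel (u p.1 + v p.2) x := by
    rw [MeasureTheory.integral_const_mul, integral_rlKernel_mul_rlKernel (hu p.1) (hv p.2) hx]
  have integral_norm_F (p : ι × κ) :
      ∫ t in Set.Ioo 0 x, ‖F p t‖ = ‖c p.1 * d p.2 * rlKernel (u p.1 + v p.2) x‖ := by
    rw [norm_mul, norm_of_nonneg (rlKernel_pos (add_pos (hu p.1) (hv p.2)) hx).le,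
      ← integral_rlKernel_mul_rlKernel (hu p.1) (hv p.2) hx, ← MeasureTheory.integral_const_mul]
    refine setIntegral_congr_fun measurableSet_Ioo fun t ht => ?_
    have kernel_pos := mul_pos (rlKernel_pos (hu p.1) (sub_mem ht).1) (rlKernel_pos (hv p.2) ht.1)
    rw [norm_mul, norm_of_nonneg kernel_pos.le]
  have mul_tsum_eq_tsum_F {t : ℝ} (ht : t ∈ Set.Ioo 0 x) :
      (∑' i, c i * rlKernel (u i) (x - t)) * ∑' j, d j * rlKernel (v j) t = ∑' p, F p t := by
    rw [tsum_mul_tsum_of_summable_norm (hc _ (sub_mem ht)).norm (hd t ht).norm]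
    exact tsum_congr fun p => mul_mul_mul_comm _ _ _ _
  rw [setIntegral_congr_fun measurableSet_Ioo fun t ht => mul_tsum_eq_tsum_F ht,
    ← integral_tsum_of_summable_integral_norm integrable_F
      (hcd.norm.congr fun p => (integral_norm_F p).symm)]
  exact tsum_congr integral_F

end RiemannLiouville

section Prabhakar

/-- The Prabhakar kernel `t ^ (β - 1) * E_{α,β}^γ(a t ^ α)`. -/
noncomputable def prabhakarKernel (α β γ a t : ℝ) : ℝ := t ^ (β - 1) * ML3 α β γ (a * t ^ α)

variable {α x t : ℝ}

theorem prabhakarKernel_eq_tsum_rlKernel (ht : 0 < t) (α β γ a : ℝ) :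
    prabhakarKernel α β γ a t =
      ∑' r : ℕ, multichoose γ r * a ^ r * rlKernel (α * r + β) t := by
  rw [prabhakarKernel, ML3, ← tsum_mul_left]
  refine tsum_congr fun r => ?_
  rw [mul_div_mul_comm, poch_div_factorial, mul_pow, rlKernel_nat_mul_add ht]
  ring

theorem summable_multichoose_mul_pow_mul_rlKernel (hα : 0 < α) (ht : 0 < t) (β γ a : ℝ) :
    Summable fun r : ℕ => multichoose γ r * a ^ r * rlKernel (α * r + β) t := by
  refine ((summable_pow_div_Gamma hα β (max |γ| 1 * (a * t ^ α))).norm.mul_left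
    ‖t ^ (β - 1)‖).of_norm_bounded fun r => ?_
  have coeff_bound : ‖multichoose γ r‖ ≤ ‖max |γ| 1 ^ r‖ :=
    ((abs_multichoose_le_multichoose_abs γ r).trans
      (multichoose_le_max_pow (abs_nonneg γ) r)).trans (le_abs_self _)
  calc ‖multichoose γ r * a ^ r * rlKernel (α * r + β) t‖
      = ‖t ^ (β - 1)‖ * (‖multichoose γ r‖ * ‖(a * t ^ α) ^ r / Gamma (α * r + β)‖) := by
        rw [rlKernel_nat_mul_add ht, ← norm_mul, ← norm_mul]
        congr 1
        ring
    _ ≤ ‖t ^ (β - 1)‖ * (‖max |γ| 1 ^ r‖ * ‖(a * t ^ α) ^ r / Gamma (α * r + β)‖) := by gcongr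
    _ = ‖t ^ (β - 1)‖ * ‖(max |γ| 1 * (a * t ^ α)) ^ r / Gamma (α * r + β)‖ := by
        rw [← norm_mul, mul_pow (max |γ| 1), mul_div_assoc]

theorem sum_antidiagonal_multichoose_mul_rlKernel (α β ν γ σ a x : ℝ) (n : ℕ) :
    ∑ p ∈ antidiagonal n, multichoose γ p.1 * a ^ p.1 * (multichoose σ p.2 * a ^ p.2) *
        rlKernel (α * p.1 + β + (α * p.2 + ν)) x =
      multichoose (γ + σ) n * a ^ n * rlKernel (α * n + (β + ν)) x := by
  rw [multichoose_add n (.all γ σ), Finset.sum_mul, Finset.sum_mul]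
  refine Finset.sum_congr rfl fun p hp => ?_
  have exponent : α * p.1 + β + (α * p.2 + ν) = α * n + (β + ν) := by
    rw [← mem_antidiagonal.1 hp]
    push_cast
    ring
  rw [exponent, ← mem_antidiagonal.1 hp, pow_add]
  ring

theorem summable_prod_multichoose_mul_rlKernel {β ν : ℝ} (hα : 0 < α) (hβ : 0 < β) (hν : 0 < ν)
    (hx : 0 < x) (γ σ a : ℝ) :
    Summable fun p : ℕ × ℕ => multichoose γ p.1 * a ^ p.1 * (multichoose σ p.2 * a ^ p.2) *
      rlKernel (α * p.1 + β + (α * p.2 + ν)) x := by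
  have rlKernel_nonneg (p : ℕ × ℕ) : 0 ≤ rlKernel (α * p.1 + β + (α * p.2 + ν)) x :=
    (rlKernel_pos (by positivity) hx).le
  have multichoose_abs_nonneg (ξ : ℝ) (r : ℕ) : 0 ≤ multichoose |ξ| r :=
    (abs_nonneg _).trans (abs_multichoose_le_multichoose_abs ξ r)
  have summable_majorant : Summable fun p : ℕ × ℕ =>
      multichoose |γ| p.1 * |a| ^ p.1 * (multichoose |σ| p.2 * |a| ^ p.2) *
        rlKernel (α * p.1 + β + (α * p.2 + ν)) x := by
    refine summable_of_summable_sum_antidiagonal (fun p => ?_) ?_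
    · have := multichoose_abs_nonneg γ p.1
      have := multichoose_abs_nonneg σ p.2
      have := rlKernel_nonneg p
      dsimp only [Pi.zero_apply]
      positivity
    · simp only [sum_antidiagonal_multichoose_mul_rlKernel]
      exact summable_multichoose_mul_pow_mul_rlKernel hα hx _ _ _
  refine summable_majorant.of_norm_bounded fun p => ?_
  simp only [norm_mul, norm_pow, norm_eq_abs, abs_of_nonneg (rlKernel_nonneg p)]
  have := rlKernel_nonneg p
  have := multichoose_abs_nonneg γ p.1
  gcongr <;> exact abs_multichoose_le_multichoose_abs _ _

theorem stmt6_general {α β ν₀ x : ℝ} (hα : 0 < α) (hβ : 0 < β) (hν : 0 < ν₀) (hx : 0 < x)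
    (γ σ a : ℝ) :
    ∫ t in (0 : ℝ)..x, prabhakarKernel α β γ a (x - t) * prabhakarKernel α ν₀ σ a t =
      prabhakarKernel α (β + ν₀) (γ + σ) a x := by
  have summable_pairs := summable_prod_multichoose_mul_rlKernel hα hβ hν hx γ σ a
  have summable_series (β γ : ℝ) : ∀ t ∈ Set.Ioo 0 x,
      Summable fun r : ℕ => multichoose γ r * a ^ r * rlKernel (α * r + β) t :=
    fun t ht => summable_multichoose_mul_pow_mul_rlKernel hα ht.1 β γ a
  rw [integral_of_le hx.le, integral_Ioc_eq_integral_Ioo]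
  calc ∫ t in Set.Ioo 0 x, prabhakarKernel α β γ a (x - t) * prabhakarKernel α ν₀ σ a t
      = ∫ t in Set.Ioo 0 x, (∑' r : ℕ, multichoose γ r * a ^ r * rlKernel (α * r + β) (x - t)) *
          ∑' s : ℕ, multichoose σ s * a ^ s * rlKernel (α * s + ν₀) t :=
        setIntegral_congr_fun measurableSet_Ioo fun t ht => by
          simp only [prabhakarKernel_eq_tsum_rlKernel (sub_pos.2 ht.2),
            prabhakarKernel_eq_tsum_rlKernel ht.1]
    _ = ∑' p : ℕ × ℕ, multichoose γ p.1 * a ^ p.1 * (multichoose σ p.2 * a ^ p.2) *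
          rlKernel (α * p.1 + β + (α * p.2 + ν₀)) x :=
        integral_tsum_rlKernel_mul_tsum_rlKernel (fun r => by positivity) (fun s => by positivity)
          hx (summable_series β γ) (summable_series ν₀ σ) summable_pairs
    _ = ∑' n : ℕ, multichoose (γ + σ) n * a ^ n * rlKernel (α * n + (β + ν₀)) x := by
        simp only [tsum_eq_tsum_sum_antidiagonal summable_pairs,
          sum_antidiagonal_multichoose_mul_rlKernel]
    _ = prabhakarKernel α (β + ν₀) (γ + σ) a x := (prabhakarKernel_eq_tsum_rlKernel hx _ _ _ _).symm

end Prabhakar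

theorem stmt6 (α β ν₀ γ σ a x : ℝ) (hα : 0 < α) (hβ : 0 < β) (hν : 0 < ν₀)
    (hγ : 0 < γ) (hσ : 0 < σ) (hx : 0 < x) :
    ∫ t in (0 : ℝ)..x,
        (x - t) ^ (β - 1) * ML3 α β γ (a * (x - t) ^ α) *
          (t ^ (ν₀ - 1) * ML3 α ν₀ σ (a * t ^ α)) =
      x ^ (β + ν₀ - 1) * ML3 α (β + ν₀) (γ + σ) (a * x ^ α) :=
  stmt6_general hα hβ hν hx γ σ a
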